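/- Let f : ℝ^d → ℝ be convex and continuously differentiable with f(0) = 0 = min f, and let X : [0,∞) → ℝ^d be a bounded solution of the critical Nesterov flow Ẍ(t) + (3/t)·Ẋ(t) + ∇f(X(t)) = 0 (t > 0) with Ẋ(t) → 0 as t → 0⁺. If there exist constants c₀ > 0 and T₀ ≥ e such that f(X(t)) ≥ c₀/(t²·log t) for all t ≥ T₀, then both weighted integrals diverge: ∫₀^∞ t·f(X(t)) dt = ∞ and ∫₀^∞ t·‖Ẋ(t)‖² dt = ∞. -/

import Mathlib

open MeasureTheory Set Filter Topology

/-- Divergence criterion: a nonnegative continuous `g` dominating the derivative of a function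
that is unbounded above has infinite integral. -/
lemma lintegral_eq_top_of_deriv_le (g G G' : ℝ → ℝ) (a : ℝ) (ha : 0 < a)
    (hg : ContinuousOn g (Ioi 0)) (hg0 : ∀ t > 0, 0 ≤ g t)
    (hG : ∀ t ≥ a, HasDerivAt G (G' t) t) (hle : ∀ t ≥ a, G' t ≤ g t)
    (hunb : ∀ M, ∃ t ≥ a, M < G t) :
    (∫⁻ t in Ioi (0:ℝ), ENNReal.ofReal (g t)) = ⊤ := by
  by_contra hne
  have hint : IntegrableOn g (Ioi 0) := by
    refine ⟨hg.aestronglyMeasurable measurableSet_Ioi, ?_⟩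
    rw [hasFiniteIntegral_iff_ofReal]
    · exact lt_top_iff_ne_top.2 hne
    · exact (ae_restrict_iff' measurableSet_Ioi).2 (Eventually.of_forall fun t ht => hg0 t ht)
  obtain ⟨t, hat, ht⟩ := hunb (G a + ∫ t in Ioi (0:ℝ), g t)
  have hsub : Icc a t ⊆ Ioi 0 := fun s hs => lt_of_lt_of_le ha hs.1
  have h1 := intervalIntegral.sub_le_integral_of_hasDeriv_right_of_le hat
    (g := G) (g' := G') (φ := g)
    (fun s hs => (hG s hs.1).continuousAt.continuousWithinAt)
    (fun s hs => (hG s hs.1.le).hasDerivWithinAt)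
    (hint.mono_set hsub) (fun s hs => hle s hs.1.le)
  rw [intervalIntegral.integral_of_le hat] at h1
  have h2 : ∫ s in Ioc a t, g s ≤ ∫ s in Ioi (0:ℝ), g s := by
    apply setIntegral_mono_set hint
    · exact (ae_restrict_iff' measurableSet_Ioi).2 (Eventually.of_forall fun t ht => hg0 t ht)
    · exact (Ioc_subset_Icc_self.trans hsub).eventuallyLE
  linarith


/-- along a bounded solution of the critical Nesterov flow for a convex
`C¹` potential `f` with `f(0) = 0 = min f`, if `f(X(t)) ≥ c₀/(t²·log t)` for all
`t ≥ T₀ ≥ e`, then the weighted integrals `∫₀^∞ t·f(X(t)) dt` and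
`∫₀^∞ t·‖Ẋ(t)‖² dt` both diverge. -/
theorem nesterov_weighted_integrals_diverge (d : ℕ)
    (f : EuclideanSpace ℝ (Fin d) → ℝ)
    (hconv : ConvexOn ℝ Set.univ f) (hf : ContDiff ℝ 1 f)
    (hf0 : f 0 = 0) (hmin : ∀ x, 0 ≤ f x)
    (X X' X'' : ℝ → EuclideanSpace ℝ (Fin d))
    (hXcont : ContinuousOn X (Set.Ici 0))
    (hX' : ∀ t > (0:ℝ), HasDerivAt X (X' t) t)
    (hX'' : ∀ t > (0:ℝ), HasDerivAt X' (X'' t) t)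
    (hX''cont : ContinuousOn X'' (Set.Ioi 0))
    (hX'0 : Filter.Tendsto X' (nhdsWithin 0 (Set.Ioi 0)) (nhds 0))
    (hODE : ∀ t > (0:ℝ), X'' t + (3 / t) • X' t + gradient f (X t) = 0)
    (hbdd : ∃ B : ℝ, ∀ t ≥ (0:ℝ), ‖X t‖ ≤ B)
    (c₀ T₀ : ℝ) (hc₀ : 0 < c₀) (hT₀ : Real.exp 1 ≤ T₀)
    (hlower : ∀ t ≥ T₀, f (X t) ≥ c₀ / (t ^ 2 * Real.log t)) :
    (∫⁻ t in Set.Ioi (0:ℝ), ENNReal.ofReal (t * f (X t))) = ⊤ ∧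
    (∫⁻ t in Set.Ioi (0:ℝ), ENNReal.ofReal (t * ‖X' t‖ ^ 2)) = ⊤ := by
  have hXc : ContinuousOn X (Ioi 0) := hXcont.mono Ioi_subset_Ici_self
  have hX'c : ContinuousOn X' (Ioi 0) := fun t ht => (hX'' t ht).continuousAt.continuousWithinAt
  have hT1 : 1 < T₀ := by
    have := Real.add_one_lt_exp (one_ne_zero : (1:ℝ) ≠ 0)
    linarith
  have hT0 : 0 < T₀ := by linarith
  have hgrad : ∀ x, HasGradientAt f (gradient f x) x := fun x =>
    ((hf.differentiable (by norm_num)) x).hasGradientAt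
  have hfX : ∀ t > (0:ℝ), HasDerivAt (fun t => f (X t)) (inner ℝ (gradient f (X t)) (X' t)) t := by
    intro t ht
    have := (hgrad (X t)).hasFDerivAt.comp_hasDerivAt t (hX' t ht)
    exact this.congr_deriv (by simp)
  have hgr : ∀ t > (0:ℝ), gradient f (X t) = - X'' t - (3 / t) • X' t := by
    intro t ht
    have := hODE t ht
    rw [← sub_eq_zero, ← this]; abel
  -- convexity
  have hcv : ∀ x, f x ≤ inner ℝ (gradient f x) x := by
    intro x
    have hl : HasDerivAt (fun s : ℝ => f (s • x)) (inner ℝ (gradient f x) x) 1 := by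
      have h1 : HasDerivAt (fun s : ℝ => s • x) x 1 := by
        simpa using (hasDerivAt_id (1:ℝ)).smul_const x
      have h2 : HasFDerivAt f (InnerProductSpace.toDual ℝ _ (gradient f x)) ((1:ℝ) • x) := by
        simpa using (hgrad x).hasFDerivAt
      exact (h2.comp_hasDerivAt (1:ℝ) h1).congr_deriv (by simp)
    have hc : ConvexOn ℝ univ (fun s : ℝ => f (s • x)) := by
      have := hconv.comp_linearMap ((LinearMap.id : ℝ →ₗ[ℝ] ℝ).smulRight x)
      simpa [Function.comp_def] using this
    have := hc.slope_le_of_hasDerivAt (mem_univ 0) (mem_univ 1) one_pos hl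
    simpa [slope_def_field, hf0] using this
  -- Lyapunov function
  have hV : ∀ t > (0:ℝ), HasDerivAt
      (fun t => t ^ 2 * f (X t) + 1 / 2 * ‖(2:ℝ) • X t + t • X' t‖ ^ 2)
      (2 * t * (f (X t) - inner ℝ (gradient f (X t)) (X t))) t := by
    intro t ht
    have h1 : HasDerivAt (fun t => (2:ℝ) • X t + t • X' t) (- t • gradient f (X t)) t := by
      refine HasDerivAt.congr_deriv (((hX' t ht).const_smul (2:ℝ)).add ((hasDerivAt_id t).smul (hX'' t ht))) ?_
      rw [hgr t ht]
      simp only [id, smul_sub, smul_neg, smul_smul, neg_smul]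
      rw [show -t * (3 / t) = -3 by field_simp]
      module
    refine HasDerivAt.congr_deriv ((((hasDerivAt_id t).pow 2).mul (hfX t ht)).add ((h1.norm_sq).const_mul (1/2))) ?_
    simp only [inner_add_left, inner_smul_left, inner_smul_right, id]
    rw [real_inner_comm (gradient f (X t)) (X t), real_inner_comm (gradient f (X t)) (X' t)]
    simp
    ring
  have hE : ∀ t > (0:ℝ), HasDerivAt
      (fun t => t ^ 2 * f (X t) + 1 / 2 * t ^ 2 * ‖X' t‖ ^ 2)
      (2 * t * (f (X t) - ‖X' t‖ ^ 2)) t := by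
    intro t ht
    refine HasDerivAt.congr_deriv ((((hasDerivAt_id t).pow 2).mul (hfX t ht)).add
      ((((hasDerivAt_id t).pow 2).const_mul (1/2)).mul (hX'' t ht).norm_sq)) ?_
    rw [hgr t ht]
    simp only [inner_sub_left, inner_neg_left, inner_smul_left, id]
    rw [real_inner_comm (X' t) (X'' t), real_inner_self_eq_norm_sq]
    simp
    field_simp
    ring
  have hanti : AntitoneOn
      (fun t => t ^ 2 * f (X t) + 1 / 2 * ‖(2:ℝ) • X t + t • X' t‖ ^ 2) (Ici T₀) := by
    apply antitoneOn_of_deriv_nonpos (convex_Ici _)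
    · exact fun t ht => (hV t (hT0.trans_le ht)).continuousAt.continuousWithinAt
    · intro t ht
      rw [interior_Ici] at ht
      exact (hV t (hT0.trans ht)).differentiableAt.differentiableWithinAt
    · intro t ht
      rw [interior_Ici] at ht
      have ht0 : 0 < t := hT0.trans ht
      rw [(hV t ht0).deriv]
      nlinarith [hcv (X t)]
  obtain ⟨C, hC⟩ : ∃ C, ∀ t ≥ T₀, t ^ 2 * f (X t) + 1 / 2 * t ^ 2 * ‖X' t‖ ^ 2 ≤ C := by
    obtain ⟨B, hB⟩ := hbdd
    obtain ⟨V, hVV⟩ : ∃ V, ∀ t ≥ T₀,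
        t ^ 2 * f (X t) + 1 / 2 * ‖(2:ℝ) • X t + t • X' t‖ ^ 2 ≤ V :=
      ⟨_, fun t ht => hanti (mem_Ici.2 le_rfl) ht ht⟩
    refine ⟨2 * V + 4 * B ^ 2, fun t ht => ?_⟩
    have ht0 : 0 < t := hT0.trans_le ht
    have h1 := hVV t ht
    have h2 := hB t ht0.le
    have h3 : ‖t • X' t‖ ≤ ‖(2:ℝ) • X t + t • X' t‖ + ‖(2:ℝ) • X t‖ := by
      calc ‖t • X' t‖ = ‖((2:ℝ) • X t + t • X' t) - (2:ℝ) • X t‖ := by congr 1; abel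
        _ ≤ _ := norm_sub_le _ _
    rw [norm_smul, norm_smul (2:ℝ), Real.norm_of_nonneg ht0.le, Real.norm_two] at h3
    have h4 : 0 ≤ t ^ 2 * f (X t) := mul_nonneg (sq_nonneg _) (hmin _)
    have h5 : ‖X t‖ ^ 2 ≤ B ^ 2 := pow_le_pow_left₀ (norm_nonneg _) h2 2
    have h6 := pow_le_pow_left₀ (by positivity) h3 2
    nlinarith [sq_nonneg (‖(2:ℝ) • X t + t • X' t‖ - 2 * ‖X t‖)]
  have hL : ∀ t ≥ T₀, HasDerivAt (fun t => c₀ * Real.log (Real.log t)) (c₀ / (t * Real.log t)) t := by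
    intro t ht
    have hl : 0 < Real.log t := Real.log_pos (hT1.trans_le ht)
    have ht0 : 0 < t := hT0.trans_le ht
    refine HasDerivAt.congr_deriv ((((Real.hasDerivAt_log ht0.ne').log hl.ne').const_mul c₀)) ?_
    field_simp
  have hLle : ∀ t ≥ T₀, c₀ / (t * Real.log t) ≤ t * f (X t) := by
    intro t ht
    have hl : 0 < Real.log t := Real.log_pos (hT1.trans_le ht)
    have ht0 : 0 < t := hT0.trans_le ht
    calc c₀ / (t * Real.log t) = t * (c₀ / (t ^ 2 * Real.log t)) := by field_simp
      _ ≤ _ := mul_le_mul_of_nonneg_left (hlower t ht) ht0.le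
  have hLunb : ∀ M, ∃ t ≥ T₀, M < c₀ * Real.log (Real.log t) := by
    intro M
    have h1 : Tendsto (fun t => c₀ * Real.log (Real.log t)) atTop atTop :=
      (Real.tendsto_log_atTop.comp Real.tendsto_log_atTop).const_mul_atTop hc₀
    obtain ⟨t, h2, h3⟩ := ((eventually_ge_atTop T₀).and (h1.eventually_gt_atTop M)).exists
    exact ⟨t, h2, h3⟩
  constructor
  · exact lintegral_eq_top_of_deriv_le (fun t => t * f (X t)) _ _ T₀ hT0
      (continuousOn_id.mul (hf.continuous.comp_continuousOn hXc))
      (fun t ht => mul_nonneg (le_of_lt ht) (hmin _)) hL hLle hLunb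
  · refine lintegral_eq_top_of_deriv_le (fun t => t * ‖X' t‖ ^ 2) _ _ T₀ hT0
      (continuousOn_id.mul (hX'c.norm.pow 2))
      (fun t ht => mul_nonneg (le_of_lt ht) (sq_nonneg _))
      (fun t ht => (hL t ht).sub ((hE t (hT0.trans_le ht)).const_mul (1/2))) ?_ ?_
    · intro t ht
      have := hLle t ht
      linarith
    · intro M
      obtain ⟨t, ht, h⟩ := hLunb (M + 1 / 2 * C)
      refine ⟨t, ht, ?_⟩
      have := hC t ht
      simp only [Pi.sub_apply]
      linarith
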